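/- Let H and G be separable real Hilbert spaces, let L ∈ B(H, G), and let W ∈ B(H), U ∈ B(G) be strongly positive self-adjoint operators with ‖U^{1/2} L W^{1/2}‖ < 1. Then the operator V': H ⊕ G → H ⊕ G: (x, v) ↦ (W^{-1} x − L* v, −L x + U^{-1} v) is a strongly positive self-adjoint bounded operator on K = H ⊕ G; moreover W^{-1} − L* U L and U^{-1} − L W L* are isomorphisms and the inverse of V' is the operator V: (x, v) ↦ ((W^{-1} − L* U L)^{-1} x + W L* (U^{-1} − L W L*)^{-1} v, (U^{-1} − L W L*)^{-1} (L W x + v)), which is also a strongly positive self-adjoint bounded operator on K. -/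

import Mathlib

open scoped RealInnerProductSpace

/-- A bounded linear operator on a real Hilbert space is strongly positive self-adjoint
if it is self-adjoint and there is `α > 0` with `⟪x, V x⟫ ≥ α ‖x‖²` for all `x`. -/
def IsSPSA {K : Type*} [NormedAddCommGroup K] [InnerProductSpace ℝ K]
    (V : K →L[ℝ] K) : Prop :=
  (∀ x y : K, ⟪V x, y⟫ = ⟪x, V y⟫) ∧ ∃ α : ℝ, 0 < α ∧ ∀ x : K, α * ‖x‖ ^ 2 ≤ ⟪x, V x⟫

/-!
A congruence `P* V P` of a strongly positive self-adjoint operator is again one as soon as `P` has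
a bounded left inverse. Writing `W = A A*`, `U = B B*` and `M = B* L A`, the operator `V'` is the
congruence of `(p, q) ↦ (p - M* q, -M p + q)`, which is strongly positive because `‖M‖ < 1`, by
`P = A* W⁻¹ ⊕ B* U⁻¹`, whose left inverse is `A ⊕ B`. The Schur complements `W⁻¹ - L* U L` and
`U⁻¹ - L W L*` are the congruences of `V'` by the graph embeddings `x ↦ (x, U L x)` and
`v ↦ (W L* v, v)`, and the inverse of `V'` is its congruence by that inverse. The block formula for
the inverse rests on the push-through identity
`W L* (U⁻¹ - L W L*)⁻¹ = (W⁻¹ - L* U L)⁻¹ L* U`.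
-/

section

open ContinuousLinearMap
open scoped InnerProduct

variable {E F H G K K' : Type*}
  [NormedAddCommGroup E] [InnerProductSpace ℝ E] [NormedAddCommGroup F] [InnerProductSpace ℝ F]
  [NormedAddCommGroup H] [InnerProductSpace ℝ H] [NormedAddCommGroup G] [InnerProductSpace ℝ G]
  [NormedAddCommGroup K] [InnerProductSpace ℝ K] [NormedAddCommGroup K'] [InnerProductSpace ℝ K']

namespace IsSPSA

theorem of_congruence {V : K →L[ℝ] K} (hV : IsSPSA V) {T : K' →L[ℝ] K'}
    (P : K' →L[ℝ] K) (Q : K →L[ℝ] K') (hQP : Function.LeftInverse Q P)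
    (hT : ∀ x y, ⟪x, T y⟫ = ⟪P x, V (P y)⟫) : IsSPSA T := by
  obtain ⟨hsymm, α, hα, hcoercive⟩ := hV
  refine ⟨fun x y => ?_, α / (‖Q‖ ^ 2 + 1), by positivity, fun x => ?_⟩
  · rw [real_inner_comm, hT, hT, ← hsymm, real_inner_comm]
  · have hlower : ‖x‖ ≤ ‖Q‖ * ‖P x‖ := by simpa only [hQP x] using Q.le_opNorm (P x)
    have hsq : ‖x‖ ^ 2 ≤ (‖Q‖ ^ 2 + 1) * ‖P x‖ ^ 2 :=
      calc ‖x‖ ^ 2 ≤ (‖Q‖ * ‖P x‖) ^ 2 := by gcongr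
        _ = ‖Q‖ ^ 2 * ‖P x‖ ^ 2 := mul_pow _ _ _
        _ ≤ (‖Q‖ ^ 2 + 1) * ‖P x‖ ^ 2 := by gcongr; linarith
    calc α / (‖Q‖ ^ 2 + 1) * ‖x‖ ^ 2
        ≤ α / (‖Q‖ ^ 2 + 1) * ((‖Q‖ ^ 2 + 1) * ‖P x‖ ^ 2) := by gcongr
      _ = α * ‖P x‖ ^ 2 := by field_simp
      _ ≤ ⟪P x, V (P x)⟫ := hcoercive (P x)
      _ = ⟪x, T x⟫ := (hT x x).symm

theorem exists_continuousLinearEquiv [CompleteSpace K] {V : K →L[ℝ] K} (hV : IsSPSA V) :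
    ∃ e : K ≃L[ℝ] K, (e : K →L[ℝ] K) = V := by
  obtain ⟨-, α, hα, hcoercive⟩ := hV
  have hunit : IsUnit V :=
    isUnit_of_forall_le_norm_inner_map V (c := ⟨α, hα.le⟩) hα fun x =>
      calc ‖x‖ ^ 2 * α = α * ‖x‖ ^ 2 := mul_comm _ _
        _ ≤ ⟪x, V x⟫ := hcoercive x
        _ = ⟪V x, x⟫ := real_inner_comm _ _
        _ ≤ ‖⟪V x, x⟫‖ := le_abs_self _
  exact ⟨ContinuousLinearEquiv.unitsEquiv ℝ K hunit.unit, rfl⟩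

theorem equiv_symm {e : K ≃L[ℝ] K} (he : IsSPSA (e : K →L[ℝ] K)) :
    IsSPSA (e.symm : K →L[ℝ] K) :=
  he.of_congruence e.symm e e.apply_symm_apply fun x y => by
    simpa using he.1 (e.symm x) (e.symm y)

theorem adjoint_eq [CompleteSpace K] {V : K →L[ℝ] K} (hV : IsSPSA V) : V† = V :=
  (isSelfAdjoint_iff_isSymmetric.mpr hV.1).adjoint_eq

end IsSPSA

/-- The operator `(x, v) ↦ (A x + B v, C x + D v)` between Hilbert direct sums, given by the block
matrix with rows `A, B` and `C, D`; the operator counterpart of `Matrix.fromBlocks`. -/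
noncomputable def fromBlocksL (A : E →L[ℝ] H) (B : F →L[ℝ] H) (C : E →L[ℝ] G) (D : F →L[ℝ] G) :
    WithLp 2 (E × F) →L[ℝ] WithLp 2 (H × G) :=
  (WithLp.prodContinuousLinearEquiv 2 ℝ H G).symm ∘L
    (A.coprod B).prod (C.coprod D) ∘L (WithLp.prodContinuousLinearEquiv 2 ℝ E F)

@[simp]
theorem fromBlocksL_apply_fst (A : E →L[ℝ] H) (B : F →L[ℝ] H) (C : E →L[ℝ] G) (D : F →L[ℝ] G)
    (z : WithLp 2 (E × F)) : (fromBlocksL A B C D z).fst = A z.fst + B z.snd :=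
  rfl

@[simp]
theorem fromBlocksL_apply_snd (A : E →L[ℝ] H) (B : F →L[ℝ] H) (C : E →L[ℝ] G) (D : F →L[ℝ] G)
    (z : WithLp 2 (E × F)) : (fromBlocksL A B C D z).snd = C z.fst + D z.snd :=
  rfl

theorem IsSPSA.schurComplement₂₂ {A : H →L[ℝ] H} {B : G →L[ℝ] H} {C : H →L[ℝ] G} {D : G ≃L[ℝ] G}
    (hV : IsSPSA (fromBlocksL A B C D)) : IsSPSA (A - B ∘L D.symm ∘L C) := by
  let graph : H →L[ℝ] WithLp 2 (H × G) :=
    (WithLp.prodContinuousLinearEquiv 2 ℝ H G).symm ∘L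
      (ContinuousLinearMap.id ℝ H).prod (-((D.symm : G →L[ℝ] G) ∘L C))
  refine hV.of_congruence graph (WithLp.fstL 2 ℝ H G) (fun _ => rfl) fun x y => ?_
  simp [graph, WithLp.prod_inner_apply, sub_eq_add_neg]

theorem IsSPSA.schurComplement₁₁ {A : H ≃L[ℝ] H} {B : G →L[ℝ] H} {C : H →L[ℝ] G} {D : G →L[ℝ] G}
    (hV : IsSPSA (fromBlocksL A B C D)) : IsSPSA (D - C ∘L A.symm ∘L B) := by
  let graph : G →L[ℝ] WithLp 2 (H × G) :=
    (WithLp.prodContinuousLinearEquiv 2 ℝ H G).symm ∘L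
      (-((A.symm : H →L[ℝ] H) ∘L B)).prod (ContinuousLinearMap.id ℝ G)
  refine hV.of_congruence graph (WithLp.sndL 2 ℝ H G) (fun _ => rfl) fun x y => ?_
  simp [graph, WithLp.prod_inner_apply, sub_eq_neg_add]

theorem schurComplement_push_through {A T : H ≃L[ℝ] H} {B : G →L[ℝ] H} {C : H →L[ℝ] G}
    {D S : G ≃L[ℝ] G} (hT : (T : H →L[ℝ] H) = A - B ∘L D.symm ∘L C)
    (hS : (S : G →L[ℝ] G) = D - C ∘L A.symm ∘L B) (v : G) :
    A.symm (B (S.symm v)) = T.symm (B (D.symm v)) := by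
  obtain ⟨w, rfl⟩ := S.surjective v
  have hT' (x : H) : T x = A x - B (D.symm (C x)) := DFunLike.congr_fun hT x
  have hS' : S w = D w - C (A.symm (B w)) := DFunLike.congr_fun hS w
  rw [S.symm_apply_apply, ContinuousLinearEquiv.eq_symm_apply, hT', hS']
  simp

theorem fromBlocksL_schurComplement_leftInverse {A T : H ≃L[ℝ] H} {B : G →L[ℝ] H}
    {C : H →L[ℝ] G} {D S : G ≃L[ℝ] G} (hT : (T : H →L[ℝ] H) = A - B ∘L D.symm ∘L C)
    (hS : (S : G →L[ℝ] G) = D - C ∘L A.symm ∘L B) :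
    Function.LeftInverse
      (fromBlocksL (T.symm : H →L[ℝ] H) (-(A.symm ∘L B ∘L S.symm)) (-(S.symm ∘L C ∘L A.symm))
        (S.symm : G →L[ℝ] G))
      (fromBlocksL A B C D) := by
  intro z
  have hT' (x : H) : T x = A x - B (D.symm (C x)) := DFunLike.congr_fun hT x
  have hS' (v : G) : S v = D v - C (A.symm (B v)) := DFunLike.congr_fun hS v
  have hfst : T.symm (A z.fst + B z.snd) - A.symm (B (S.symm (C z.fst + D z.snd))) = z.fst := by
    rw [schurComplement_push_through hT hS, ← map_sub, ContinuousLinearEquiv.symm_apply_eq, hT']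
    simp
  have hsnd : -S.symm (C (A.symm (A z.fst + B z.snd))) + S.symm (C z.fst + D z.snd) = z.snd := by
    rw [← map_neg, ← map_add, ContinuousLinearEquiv.symm_apply_eq, hS']
    simp only [map_add, ContinuousLinearEquiv.symm_apply_apply]
    abel
  refine WithLp.ofLp_injective 2 (Prod.ext ?_ ?_)
  · simpa [sub_eq_add_neg] using hfst
  · simpa using hsnd

variable [CompleteSpace E] [CompleteSpace F] [CompleteSpace H] [CompleteSpace G]

theorem isSPSA_fromBlocksL_id_of_norm_lt_one {M : E →L[ℝ] F} (hM : ‖M‖ < 1) :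
    IsSPSA (fromBlocksL (.id ℝ E) (-M†) (-M) (.id ℝ F)) := by
  refine ⟨fun z w => ?_, 1 - ‖M‖, sub_pos.mpr hM, fun z => ?_⟩
  · simp only [WithLp.prod_inner_apply, WithLp.ofLp_fst, WithLp.ofLp_snd, fromBlocksL_apply_fst,
      fromBlocksL_apply_snd, neg_apply, id_apply, inner_add_left, inner_add_right, inner_neg_left,
      inner_neg_right, adjoint_inner_left, adjoint_inner_right]
    ring
  · have hcross : ⟪M z.fst, z.snd⟫ ≤ ‖M‖ * (‖z.fst‖ * ‖z.snd‖) :=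
      calc ⟪M z.fst, z.snd⟫ ≤ ‖M z.fst‖ * ‖z.snd‖ := real_inner_le_norm _ _
        _ ≤ ‖M‖ * ‖z.fst‖ * ‖z.snd‖ := by gcongr; exact M.le_opNorm _
        _ = ‖M‖ * (‖z.fst‖ * ‖z.snd‖) := mul_assoc _ _ _
    have hform : ⟪z, fromBlocksL (.id ℝ E) (-M†) (-M) (.id ℝ F) z⟫ =
        ‖z.fst‖ ^ 2 - 2 * ⟪M z.fst, z.snd⟫ + ‖z.snd‖ ^ 2 := by
      simp only [WithLp.prod_inner_apply, WithLp.ofLp_fst, WithLp.ofLp_snd, fromBlocksL_apply_fst,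
        fromBlocksL_apply_snd, neg_apply, id_apply, inner_add_right, inner_neg_right,
        adjoint_inner_right, real_inner_self_eq_norm_sq, real_inner_comm (M z.fst) z.snd]
      ring
    rw [hform, WithLp.prod_norm_sq_eq_of_L2]
    linarith [mul_le_mul_of_nonneg_left (two_mul_le_add_sq ‖z.fst‖ ‖z.snd‖) (norm_nonneg M)]

theorem isSPSA_fromBlocksL_symm_of_norm_lt_one {L : H →L[ℝ] G} {A : E →L[ℝ] H} {B : F →L[ℝ] G}
    {W : H ≃L[ℝ] H} {U : G ≃L[ℝ] G} (hW : ∀ x, A ((A†) x) = W x) (hU : ∀ v, B ((B†) v) = U v)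
    (hnorm : ‖B† ∘L L ∘L A‖ < 1) :
    IsSPSA (fromBlocksL (W.symm : H →L[ℝ] H) (-L†) (-L) (U.symm : G →L[ℝ] G)) := by
  let P : WithLp 2 (H × G) →L[ℝ] WithLp 2 (E × F) :=
    fromBlocksL (A† ∘L W.symm) 0 0 (B† ∘L U.symm)
  refine (isSPSA_fromBlocksL_id_of_norm_lt_one hnorm).of_congruence P (fromBlocksL A 0 0 B)
    (fun z => ?_) fun z w => ?_
  · exact WithLp.ofLp_injective 2 (Prod.ext (by simp [P, hW]) (by simp [P, hU]))
  · simp [P, WithLp.prod_inner_apply, hW, hU, adjoint_comp, inner_add_right,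
      adjoint_inner_right]

theorem stmt_4_general (L : H →L[ℝ] G) (A : E →L[ℝ] H) (B : F →L[ℝ] G)
    (W : H ≃L[ℝ] H) (U : G ≃L[ℝ] G)
    (hW : ∀ x, A ((A†) x) = W x) (hU : ∀ v, B ((B†) v) = U v) (hnorm : ‖B† ∘L L ∘L A‖ < 1)
    (V' : WithLp 2 (H × G) →L[ℝ] WithLp 2 (H × G))
    (hV'_fst : ∀ z, (V' z).fst = W.symm z.fst - (L†) z.snd)
    (hV'_snd : ∀ z, (V' z).snd = -L z.fst + U.symm z.snd) :
    IsSPSA V' ∧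
    ∃ T : H →L[ℝ] H, ∃ S : G →L[ℝ] G,
      (∀ x, ((W.symm : H →L[ℝ] H) - L† ∘L U ∘L L) (T x) = x) ∧
      (∀ x, T (((W.symm : H →L[ℝ] H) - L† ∘L U ∘L L) x) = x) ∧
      (∀ v, ((U.symm : G →L[ℝ] G) - L ∘L W ∘L L†) (S v) = v) ∧
      (∀ v, S (((U.symm : G →L[ℝ] G) - L ∘L W ∘L L†) v) = v) ∧
      ∃ V : WithLp 2 (H × G) →L[ℝ] WithLp 2 (H × G),
        (∀ z, (V z).fst = T z.fst + W ((L†) (S z.snd))) ∧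
        (∀ z, (V z).snd = S (L (W z.fst) + z.snd)) ∧
        (∀ z, V (V' z) = z) ∧ (∀ z, V' (V z) = z) ∧ IsSPSA V := by
  obtain rfl : V' = fromBlocksL (W.symm : H →L[ℝ] H) (-L†) (-L) (U.symm : G →L[ℝ] G) :=
    ContinuousLinearMap.ext fun z => WithLp.ofLp_injective 2 <| Prod.ext
      (by simp [hV'_fst, sub_eq_add_neg]) (by simp [hV'_snd])
  have hV' := isSPSA_fromBlocksL_symm_of_norm_lt_one hW hU hnorm
  obtain ⟨T, hT⟩ := hV'.schurComplement₂₂.exists_continuousLinearEquiv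
  obtain ⟨S, hS⟩ := hV'.schurComplement₁₁.exists_continuousLinearEquiv
  obtain ⟨e, he⟩ := hV'.exists_continuousLinearEquiv
  have hT' : (W.symm : H →L[ℝ] H) - L† ∘L U ∘L L = T := by simp [hT]
  have hS' : (U.symm : G →L[ℝ] G) - L ∘L W ∘L L† = S := by simp [hS]
  have hinv (z) := fromBlocksL_schurComplement_leftInverse hT hS (e.symm z)
  rw [← he] at hV' hinv ⊢
  simp only [ContinuousLinearEquiv.coe_coe, e.apply_symm_apply] at hinv
  rw [hT', hS']
  refine ⟨hV', T.symm, S.symm, T.apply_symm_apply, T.symm_apply_apply, S.apply_symm_apply,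
    S.symm_apply_apply, e.symm, fun z => ?_, fun z => ?_, e.symm_apply_apply, e.apply_symm_apply,
    hV'.equiv_symm⟩
  · simpa using (congrArg WithLp.fst (hinv z)).symm
  · simpa using (congrArg WithLp.snd (hinv z)).symm

end

/-- the operator `V' : (x,v) ↦ (W⁻¹x − L*v, −Lx + U⁻¹v)` on `H ⊕ G` is strongly
positive self-adjoint; `W⁻¹ − L*UL` and `U⁻¹ − LWL*` are isomorphisms; and the inverse of
`V'` is `V : (x,v) ↦ ((W⁻¹ − L*UL)⁻¹x + WL*(U⁻¹ − LWL*)⁻¹v, (U⁻¹ − LWL*)⁻¹(LWx + v))`,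
itself strongly positive self-adjoint. -/
theorem stmt_4
    {H : Type*} [NormedAddCommGroup H] [InnerProductSpace ℝ H] [CompleteSpace H]
    [TopologicalSpace.SeparableSpace H]
    {G : Type*} [NormedAddCommGroup G] [InnerProductSpace ℝ G] [CompleteSpace G]
    [TopologicalSpace.SeparableSpace G]
    (L : H →L[ℝ] G)
    (W Winv Whalf : H →L[ℝ] H) (U Uinv Uhalf : G →L[ℝ] G)
    (hW : IsSPSA W) (hU : IsSPSA U)
    (hWhalfSPSA : IsSPSA Whalf) (hUhalfSPSA : IsSPSA Uhalf)
    (hWhalf : ∀ x : H, Whalf (Whalf x) = W x) (hUhalf : ∀ v : G, Uhalf (Uhalf v) = U v)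
    (hWinv : ∀ x : H, W (Winv x) = x) (hWinv' : ∀ x : H, Winv (W x) = x)
    (hUinv : ∀ v : G, U (Uinv v) = v) (hUinv' : ∀ v : G, Uinv (U v) = v)
    (hnorm : ‖Uhalf.comp (L.comp Whalf)‖ < 1)
    (V' : WithLp 2 (H × G) →L[ℝ] WithLp 2 (H × G))
    (hV'1 : ∀ z : WithLp 2 (H × G),
      (WithLp.equiv 2 (H × G) (V' z)).1
        = Winv (WithLp.equiv 2 (H × G) z).1
            - ContinuousLinearMap.adjoint L (WithLp.equiv 2 (H × G) z).2)
    (hV'2 : ∀ z : WithLp 2 (H × G),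
      (WithLp.equiv 2 (H × G) (V' z)).2
        = -L (WithLp.equiv 2 (H × G) z).1 + Uinv (WithLp.equiv 2 (H × G) z).2) :
    IsSPSA V' ∧
    ∃ T : H →L[ℝ] H, ∃ S : G →L[ℝ] G,
      (∀ x : H, (Winv - (ContinuousLinearMap.adjoint L).comp (U.comp L)) (T x) = x) ∧
      (∀ x : H, T ((Winv - (ContinuousLinearMap.adjoint L).comp (U.comp L)) x) = x) ∧
      (∀ v : G, (Uinv - L.comp (W.comp (ContinuousLinearMap.adjoint L))) (S v) = v) ∧
      (∀ v : G, S ((Uinv - L.comp (W.comp (ContinuousLinearMap.adjoint L))) v) = v) ∧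
      ∃ V : WithLp 2 (H × G) →L[ℝ] WithLp 2 (H × G),
        (∀ z : WithLp 2 (H × G),
          (WithLp.equiv 2 (H × G) (V z)).1
            = T (WithLp.equiv 2 (H × G) z).1
                + W (ContinuousLinearMap.adjoint L (S (WithLp.equiv 2 (H × G) z).2))) ∧
        (∀ z : WithLp 2 (H × G),
          (WithLp.equiv 2 (H × G) (V z)).2
            = S (L (W (WithLp.equiv 2 (H × G) z).1) + (WithLp.equiv 2 (H × G) z).2)) ∧
        (∀ z, V (V' z) = z) ∧ (∀ z, V' (V z) = z) ∧ IsSPSA V := by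
  exact stmt_4_general L Whalf Uhalf (.equivOfInverse W Winv hWinv' hWinv)
    (.equivOfInverse U Uinv hUinv' hUinv) (by simpa [hWhalfSPSA.adjoint_eq] using hWhalf)
    (by simpa [hUhalfSPSA.adjoint_eq] using hUhalf) (by rwa [hUhalfSPSA.adjoint_eq])
    V' hV'1 hV'2
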